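/- Let 𝒳 be a finite-dimensional real inner product space, β ≥ 0, A, B : 𝒳 ⇉ 𝒳 maximal β-strongly monotone, γ > 0, θ₀ := 1 + γβ/2, and assume θ ∈ (0, 2θ₀]. Let {x_k} be generated by the relaxed PR splitting method from x₀ ∈ 𝒳. Then for every k ≥ 2, ‖x_k − x_{k−1}‖ ≤ ‖x_{k−1} − x_{k−2}‖. -/

import Mathlib

open RealInnerProductSpace Filter Pointwise

/-- The inner product on the triple product space `𝒵 = 𝒳 × 𝒳 × 𝒳`. -/
noncomputable def inner3 {X : Type*} [NormedAddCommGroup X] [InnerProductSpace ℝ X]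
    (z z' : X × X × X) : ℝ :=
  ⟪z.1, z'.1⟫ + ⟪z.2.1, z'.2.1⟫ + ⟪z.2.2, z'.2.2⟫

/-- The linear map `ℒ_θ̃(u,v,x) := ((1−θ̃)u + θ̃v − x, (θ̃−2)u + (1−θ̃)v + x, u − v)`. -/
def Lmap {X : Type*} [NormedAddCommGroup X] [InnerProductSpace ℝ X]
    (θ : ℝ) (z : X × X × X) : X × X × X :=
  ((1 - θ) • z.1 + θ • z.2.1 - z.2.2,
    (θ - 2) • z.1 + (1 - θ) • z.2.1 + z.2.2,
    z.1 - z.2.1)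

/-- The operator `(ℒ_θ̃ + γC)(u,v,x)` where `C(u,v,x) := A(u) × B(v) × {0}`. -/
def LC {X : Type*} [NormedAddCommGroup X] [InnerProductSpace ℝ X]
    (θ γ : ℝ) (A B : X → Set X) (z : X × X × X) : Set (X × X × X) :=
  {rr | ∃ a ∈ A z.1, ∃ b ∈ B z.2.1, rr = Lmap θ z + γ • ((a, b, (0 : X)) : X × X × X)}

/-- `T : 𝒳 ⇉ 𝒳` is β-strongly monotone (β = 0 meaning just monotone). -/
def StrMono {X : Type*} [NormedAddCommGroup X] [InnerProductSpace ℝ X]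
    (β : ℝ) (T : X → Set X) : Prop :=
  ∀ x x' w w' : X, w ∈ T x → w' ∈ T x' → β * ‖x - x'‖ ^ 2 ≤ ⟪w - w', x - x'⟫

/-- `T : 𝒳 ⇉ 𝒳` is maximal β-strongly monotone: it is β-strongly monotone and its graph
is not properly contained in the graph of another monotone operator. -/
def MaxStrMono {X : Type*} [NormedAddCommGroup X] [InnerProductSpace ℝ X]
    (β : ℝ) (T : X → Set X) : Prop :=
  StrMono β T ∧ ∀ T' : X → Set X, StrMono 0 T' → (∀ x, T x ⊆ T' x) → T' = T

/-- Monotonicity of an operator on the triple product space `𝒵 = 𝒳³`. -/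
def Mono3 {X : Type*} [NormedAddCommGroup X] [InnerProductSpace ℝ X]
    (T : (X × X × X) → Set (X × X × X)) : Prop :=
  ∀ z z' t t', t ∈ T z → t' ∈ T z' → 0 ≤ inner3 (z - z') (t - t')

/-- Maximal monotonicity of an operator on the triple product space `𝒵 = 𝒳³`. -/
def MaxMono3 {X : Type*} [NormedAddCommGroup X] [InnerProductSpace ℝ X]
    (T : (X × X × X) → Set (X × X × X)) : Prop :=
  Mono3 T ∧ ∀ T', Mono3 T' → (∀ z, T z ⊆ T' z) → T' = T

/-- The ε-enlargement `T^[ε]` of an operator on `𝒳`. -/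
def epsEnlX {X : Type*} [NormedAddCommGroup X] [InnerProductSpace ℝ X]
    (T : X → Set X) (ε : ℝ) (z : X) : Set X :=
  {t | ∀ z' t' : X, t' ∈ T z' → -ε ≤ ⟪t - t', z - z'⟫}

/-- The relaxed Peaceman–Rachford splitting method with relaxation parameter `θ` and
scaling `γ`: for `k ≥ 1`, `u_k = J_{γA}(x_{k−1})`, `v_k = J_{γB}(2u_k − x_{k−1})`
(expressed through resolvent inclusions) and `x_k = x_{k−1} + θ(v_k − u_k)`. -/
structure RPR {X : Type*} [NormedAddCommGroup X] [InnerProductSpace ℝ X]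
    (A B : X → Set X) (γ θ : ℝ) (x u v : ℕ → X) : Prop where
  resA : ∀ k, 1 ≤ k → x (k - 1) - u k ∈ γ • A (u k)
  resB : ∀ k, 1 ≤ k → (2 : ℝ) • u k - x (k - 1) - v k ∈ γ • B (v k)
  step : ∀ k, 1 ≤ k → x k = x (k - 1) + θ • (v k - u k)

/-!
Write `d = u - v` for the residual of a Peaceman–Rachford step from `x`, so that the step is
`x ↦ x - θ d`. Adding the strong monotonicity inequalities for two steps gives
`⟪x - x', d - d'⟫ ≥ ‖d - d'‖² + γβ (‖u - u'‖² + ‖v - v'‖²)`, and the last term is at least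
`(γβ / 2) ‖d - d'‖²`. Hence the residual is `θ₀`-cocoercive, which makes `x ↦ x - θ d`
nonexpansive for `0 ≤ θ ≤ 2θ₀`; apply this to two consecutive iterates.
-/

lemma norm_sub_sq_le_two_mul_add {E : Type*} [SeminormedAddGroup E] (a b : E) :
    ‖a - b‖ ^ 2 ≤ 2 * (‖a‖ ^ 2 + ‖b‖ ^ 2) := calc
  ‖a - b‖ ^ 2 ≤ (‖a‖ + ‖b‖) ^ 2 := by gcongr; exact norm_sub_le a b
  _ ≤ 2 * (‖a‖ ^ 2 + ‖b‖ ^ 2) := add_sq_le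

section Cocoercive

variable {X : Type*} [SeminormedAddCommGroup X] [InnerProductSpace ℝ X]

/-- A set-valued operator `R` is `c`-cocoercive if its inverse is `c`-strongly monotone; for such
`R` the relaxed map `x ↦ x - θ R(x)` is nonexpansive. The condition is stated on the graph of `R`,
which is not assumed single-valued. -/
def Cocoercive (c : ℝ) (R : X → Set X) : Prop :=
  ∀ ⦃x x' d d' : X⦄, d ∈ R x → d' ∈ R x' → c * ‖d - d'‖ ^ 2 ≤ ⟪x - x', d - d'⟫

lemma norm_sub_smul_le_of_mul_norm_sq_le_inner {c θ : ℝ} {p d : X} (hθ : 0 ≤ θ)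
    (hθc : θ ≤ 2 * c) (h : c * ‖d‖ ^ 2 ≤ ⟪p, d⟫) : ‖p - θ • d‖ ≤ ‖p‖ := by
  refine le_of_sq_le_sq ?_ (norm_nonneg p)
  have hinner : θ * ‖d‖ ^ 2 ≤ 2 * ⟪p, d⟫ := calc
    θ * ‖d‖ ^ 2 ≤ 2 * c * ‖d‖ ^ 2 := by gcongr
    _ ≤ 2 * ⟪p, d⟫ := by linarith
  calc ‖p - θ • d‖ ^ 2 = ‖p‖ ^ 2 + θ * (θ * ‖d‖ ^ 2 - 2 * ⟪p, d⟫) := by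
        rw [norm_sub_sq_real, real_inner_smul_right, norm_smul, mul_pow, Real.norm_eq_abs, sq_abs]
        ring
    _ ≤ ‖p‖ ^ 2 := by
        linarith [mul_nonpos_of_nonneg_of_nonpos hθ (sub_nonpos.2 hinner)]

lemma Cocoercive.norm_sub_smul_sub_sub_smul_le {c θ : ℝ} {R : X → Set X} (hR : Cocoercive c R)
    (hθ : 0 ≤ θ) (hθc : θ ≤ 2 * c) {x x' d d' : X} (hd : d ∈ R x) (hd' : d' ∈ R x') :
    ‖(x - θ • d) - (x' - θ • d')‖ ≤ ‖x - x'‖ := by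
  rw [sub_sub_sub_comm, ← smul_sub]
  exact norm_sub_smul_le_of_mul_norm_sq_le_inner hθ hθc (hR hd hd')

lemma inner_sub_self_add_inner_two_smul_sub_sub_self (p a b : X) :
    ⟪p - a, a⟫ + ⟪(2 : ℝ) • a - p - b, b⟫ = ⟪p, a - b⟫ - ‖a - b‖ ^ 2 := by
  simp only [inner_sub_left, inner_sub_right, real_inner_smul_left, real_inner_self_eq_norm_sq,
    norm_sub_sq_real]
  ring

end Cocoercive

/-- The residuals `u - v` of a Peaceman–Rachford step from `x`, where `u = J_A(x)` and
`v = J_B(2u - x)` are expressed through resolvent inclusions. It is set-valued because the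
resolvents need be neither single-valued nor everywhere defined. The scaling is absorbed into the
operators, so the method with scaling `γ` has residual `prResidual (γ • A) (γ • B)`. -/
def prResidual {X : Type*} [AddCommGroup X] [Module ℝ X] (A B : X → Set X) (x : X) : Set X :=
  {d | ∃ u v, x - u ∈ A u ∧ (2 : ℝ) • u - x - v ∈ B v ∧ d = u - v}

section Splitting

variable {X : Type*} [NormedAddCommGroup X] [InnerProductSpace ℝ X] {A B : X → Set X}

lemma StrMono.smul {β γ : ℝ} (hA : StrMono β A) (hγ : 0 ≤ γ) : StrMono (γ * β) (γ • A) := by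
  rintro x x' _ _ ⟨w, hw, rfl⟩ ⟨w', hw', rfl⟩
  calc γ * β * ‖x - x'‖ ^ 2 = γ * (β * ‖x - x'‖ ^ 2) := mul_assoc ..
    _ ≤ γ * ⟪w - w', x - x'⟫ := by gcongr; exact hA x x' w w' hw hw'
    _ = ⟪γ • w - γ • w', x - x'⟫ := by rw [← smul_sub, real_inner_smul_left]

lemma StrMono.cocoercive_prResidual {σ : ℝ} (hσ : 0 ≤ σ) (hA : StrMono σ A) (hB : StrMono σ B) :
    Cocoercive (1 + σ / 2) (prResidual A B) := by
  rintro x x' _ _ ⟨u, v, hu, hv, rfl⟩ ⟨u', v', hu', hv', rfl⟩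
  have hAu : σ * ‖u - u'‖ ^ 2 ≤ ⟪(x - x') - (u - u'), u - u'⟫ := by
    simpa only [sub_sub_sub_comm] using hA u u' _ _ hu hu'
  have hBv : σ * ‖v - v'‖ ^ 2 ≤ ⟪(2 : ℝ) • (u - u') - (x - x') - (v - v'), v - v'⟫ := by
    simpa only [smul_sub, sub_sub_sub_comm] using hB v v' _ _ hv hv'
  have hsplit := inner_sub_self_add_inner_two_smul_sub_sub_self (x - x') (u - u') (v - v')
  have hpar := mul_le_mul_of_nonneg_left (norm_sub_sq_le_two_mul_add (u - u') (v - v')) hσ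
  rw [sub_sub_sub_comm u v u' v']
  linarith

namespace RPR

variable {γ θ : ℝ} {x u v : ℕ → X}

lemma sub_mem_prResidual (h : RPR A B γ θ x u v) (n : ℕ) :
    u (n + 1) - v (n + 1) ∈ prResidual (γ • A) (γ • B) (x n) :=
  ⟨u (n + 1), v (n + 1), h.resA (n + 1) n.succ_pos, h.resB (n + 1) n.succ_pos, rfl⟩

lemma succ_eq_sub_smul (h : RPR A B γ θ x u v) (n : ℕ) :
    x (n + 1) = x n - θ • (u (n + 1) - v (n + 1)) := by
  rw [h.step (n + 1) n.succ_pos, Nat.add_sub_cancel, ← neg_sub (u _), smul_neg, ← sub_eq_add_neg]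

end RPR

end Splitting

theorem stmt15_general {X : Type*} [NormedAddCommGroup X] [InnerProductSpace ℝ X]
    {β γ θ : ℝ} (hβ : 0 ≤ β) {A B : X → Set X} (hA : StrMono β A) (hB : StrMono β B)
    (hγ : 0 ≤ γ) (hθ : 0 ≤ θ) (hθle : θ ≤ 2 * (1 + γ * β / 2))
    {x u v : ℕ → X} (hpr : RPR A B γ θ x u v) :
    ∀ k, 2 ≤ k → ‖x k - x (k - 1)‖ ≤ ‖x (k - 1) - x (k - 2)‖ := by
  intro k hk
  obtain ⟨n, rfl⟩ := Nat.exists_eq_add_of_le' hk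
  have hcoco : Cocoercive (1 + γ * β / 2) (prResidual (γ • A) (γ • B)) :=
    StrMono.cocoercive_prResidual (mul_nonneg hγ hβ) (hA.smul hγ) (hB.smul hγ)
  calc ‖x (n + 2) - x (n + 1)‖
      = ‖(x (n + 1) - θ • (u (n + 2) - v (n + 2))) - (x n - θ • (u (n + 1) - v (n + 1)))‖ := by
        rw [← hpr.succ_eq_sub_smul (n + 1), ← hpr.succ_eq_sub_smul n]
    _ ≤ ‖x (n + 1) - x n‖ :=
        hcoco.norm_sub_smul_sub_sub_smul_le hθ hθle (hpr.sub_mem_prResidual (n + 1))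
          (hpr.sub_mem_prResidual n)

/-- For `θ ∈ (0, 2θ₀]` with `θ₀ = 1 + γβ/2`, the stepsizes
`‖x_k − x_{k−1}‖` of the relaxed PR splitting method are non-increasing. -/
theorem stmt15 {X : Type*} [NormedAddCommGroup X] [InnerProductSpace ℝ X]
    [FiniteDimensional ℝ X]
    (β : ℝ) (hβ : 0 ≤ β) (A B : X → Set X)
    (hA : MaxStrMono β A) (hB : MaxStrMono β B)
    (γ θ θ0 : ℝ) (hγ : 0 < γ) (hθ0 : θ0 = 1 + γ * β / 2)
    (hθpos : 0 < θ) (hθle : θ ≤ 2 * θ0)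
    (x u v : ℕ → X) (hpr : RPR A B γ θ x u v) :
    ∀ k, 2 ≤ k → ‖x k - x (k - 1)‖ ≤ ‖x (k - 1) - x (k - 2)‖ :=
  stmt15_general hβ hA.1 hB.1 hγ.le hθpos.le (hθ0 ▸ hθle) hpr
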